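/- Let b ≥ 2 be an integer, s ∈ ℕ, and let a = (a_j)_{j≥1} be a nondecreasing sequence of real weights. Set n_j = #{i ∈ ℕ : i + a_j ≤ 1}, S = (b−1)·∑_{j=1}^s n_j, and C_s = exp( S + (log b)/2 + 2(b−1)s/log b ) · (1 − exp(−(log b)/2))^{−1}. Then for every digital net P over ℤ_b with dual net P^⊥ and minimal weight δ_{P^⊥} = inf_{k ∈ P^⊥ \ {0}} μ'_a(k), one has e^wor(P, W'_{s,a}) ≤ C_s · exp(−δ_{P^⊥}·(log b)/2). -/

import Mathlib

open MeasureTheory Matrix Filter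
open scoped ENNReal BigOperators Topology

noncomputable section

/-- The `b`-adic digit of `k : ℕ` at place `b^i` (i.e. the `(i+1)`-st digit). -/
def natDigit (b k i : ℕ) : ℕ := k / b ^ i % b

/-- The `(i+1)`-st `b`-adic digit of a real number `x ∈ [0,1)`
(using the expansion in which infinitely many digits differ from `b-1`). -/
def realDigit (b : ℕ) (x : ℝ) (i : ℕ) : ℕ := (⌊x * (b : ℝ) ^ (i + 1)⌋ % (b : ℤ)).toNat

/-- The `k`-th one-dimensional `b`-adic Walsh function. -/
def wal1 (b k : ℕ) (x : ℝ) : ℂ :=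
  Complex.exp (2 * Real.pi * Complex.I / (b : ℂ) *
    ((∑ i ∈ Finset.range k, natDigit b k i * realDigit b x i : ℕ) : ℂ))

/-- The `k`-th `s`-dimensional `b`-adic Walsh function. -/
def wal (b : ℕ) {s : ℕ} (k : Fin s → ℕ) (x : Fin s → ℝ) : ℂ :=
  ∏ j, wal1 b (k j) (x j)

/-- The unit cube `[0,1)^s`. -/
def unitCube (s : ℕ) : Set (Fin s → ℝ) := Set.univ.pi fun _ => Set.Ico (0 : ℝ) 1

/-- The `k`-th Walsh coefficient of `f`. -/
def walshCoeff (b : ℕ) {s : ℕ} (f : (Fin s → ℝ) → ℝ) (k : Fin s → ℕ) : ℂ :=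
  ∫ x in unitCube s, (f x : ℂ) * (starRingEnd ℂ) (wal b k x)

/-- The generalized Dick weight `μ_a(k)`, one-dimensional case. -/
def dickWt (b : ℕ) (a : ℝ) (k : ℕ) : ℝ :=
  ∑ i ∈ Finset.range k, if natDigit b k i ≠ 0 then ((i : ℝ) + 1 + a) else 0

/-- The generalized Dick weight `μ_a(k)` for vectors. -/
def dickWtV (b : ℕ) {s : ℕ} (a : Fin s → ℝ) (k : Fin s → ℕ) : ℝ :=
  ∑ j, dickWt b (a j) (k j)

/-- The modified Dick weight `μ'_a(k)`, one-dimensional case. -/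
def mdickWt (b : ℕ) (a : ℝ) (k : ℕ) : ℝ :=
  ∑ i ∈ Finset.range k, if natDigit b k i ≠ 0 then max ((i : ℝ) + 1 + a) 1 else 0

/-- The modified Dick weight `μ'_a(k)` for vectors. -/
def mdickWtV (b : ℕ) {s : ℕ} (a : Fin s → ℝ) (k : Fin s → ℕ) : ℝ :=
  ∑ j, mdickWt b (a j) (k j)

/-- Digitwise subtraction modulo `b` of natural numbers. -/
def dsub (b k k' : ℕ) : ℕ :=
  ∑ i ∈ Finset.range (k + k' + 1), ((natDigit b k i + (b - natDigit b k' i)) % b) * b ^ i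

/-- The integral of `f` over the unit cube. -/
def intBox (s : ℕ) (f : (Fin s → ℝ) → ℝ) : ℝ := ∫ x in unitCube s, f x

/-- Membership in the Walsh space `W_{s,a}`: `f` equals its (convergent) Walsh series
and has finite norm. -/
def MemW (b : ℕ) {s : ℕ} (a : Fin s → ℝ) (f : (Fin s → ℝ) → ℝ) : Prop :=
  (∀ x ∈ unitCube s, HasSum (fun k : Fin s → ℕ => walshCoeff b f k * wal b k x) ((f x : ℂ))) ∧
  BddAbove (Set.range fun k : Fin s → ℕ => ‖walshCoeff b f k‖ * (b : ℝ) ^ dickWtV b a k)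

/-- The norm of the Walsh space `W_{s,a}`. -/
def normW (b : ℕ) {s : ℕ} (a : Fin s → ℝ) (f : (Fin s → ℝ) → ℝ) : ℝ :=
  ⨆ k : Fin s → ℕ, ‖walshCoeff b f k‖ * (b : ℝ) ^ dickWtV b a k

/-- Membership in the modified Walsh space `W'_{s,a}`. -/
def MemW' (b : ℕ) {s : ℕ} (a : Fin s → ℝ) (f : (Fin s → ℝ) → ℝ) : Prop :=
  (∀ x ∈ unitCube s, HasSum (fun k : Fin s → ℕ => walshCoeff b f k * wal b k x) ((f x : ℂ))) ∧
  BddAbove (Set.range fun k : Fin s → ℕ => ‖walshCoeff b f k‖ * (b : ℝ) ^ mdickWtV b a k)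

/-- The norm of the modified Walsh space `W'_{s,a}`. -/
def normW' (b : ℕ) {s : ℕ} (a : Fin s → ℝ) (f : (Fin s → ℝ) → ℝ) : ℝ :=
  ⨆ k : Fin s → ℕ, ‖walshCoeff b f k‖ * (b : ℝ) ^ mdickWtV b a k

/-- The worst-case error of the algorithm `A` over the unit ball of `(H, N)`. -/
def worstErr (s : ℕ) (H : Set ((Fin s → ℝ) → ℝ)) (N : ((Fin s → ℝ) → ℝ) → ℝ)
    (A : ((Fin s → ℝ) → ℝ) → ℝ) : ℝ≥0∞ :=
  ⨆ (f : (Fin s → ℝ) → ℝ) (_ : f ∈ H) (_ : N f ≤ 1), ENNReal.ofReal |intBox s f - A f|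

/-- The `n`-th minimal worst-case error over all algorithms using `n` function values
at points of the unit cube. -/
def minErr (n s : ℕ) (H : Set ((Fin s → ℝ) → ℝ)) (N : ((Fin s → ℝ) → ℝ) → ℝ) : ℝ≥0∞ :=
  ⨅ (t : Fin n → Fin s → ℝ) (_ : ∀ i, t i ∈ unitCube s) (φ : (Fin n → ℝ) → ℝ),
    worstErr s H N fun f => φ fun i => f (t i)

/-- Partial derivative in the `j`-th coordinate. -/
def pd {s : ℕ} (j : Fin s) (f : (Fin s → ℝ) → ℝ) : (Fin s → ℝ) → ℝ :=
  fun x => deriv (fun t => f (Function.update x j t)) (x j)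

/-- The mixed partial derivative `f^{(α)}`. -/
def mpd {s : ℕ} (α : Fin s → ℕ) (f : (Fin s → ℝ) → ℝ) : (Fin s → ℝ) → ℝ :=
  (List.finRange s).foldr (fun j g => (pd j)^[α j] g) f

/-- Membership in the space `S_{s,u}` of smooth functions. -/
def MemS {s : ℕ} (u : Fin s → ℝ) (f : (Fin s → ℝ) → ℝ) : Prop :=
  ContDiff ℝ (⊤ : ℕ∞) f ∧
  BddAbove (Set.range fun α : Fin s → ℕ =>
    (∫ x in unitCube s, |mpd α f x|) / ∏ j, u j ^ α j)

/-- The norm of the space `S_{s,u}`. -/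
def normS {s : ℕ} (u : Fin s → ℝ) (f : (Fin s → ℝ) → ℝ) : ℝ :=
  ⨆ α : Fin s → ℕ, (∫ x in unitCube s, |mpd α f x|) / ∏ j, u j ^ α j

/-- The column vector of the first `m` `b`-adic digits of `k`. -/
def trunc (b m k : ℕ) : Fin m → ZMod b := fun i => (natDigit b k (i : ℕ) : ZMod b)

/-- The `m`-th point of the digital net determined by generating matrices `G`. -/
def netPoint (b : ℕ) {s l d : ℕ} (G : Fin s → Matrix (Fin l) (Fin d) (ZMod b)) (m : ℕ) :
    Fin s → ℝ :=
  fun j => ∑ i : Fin l, (((G j).mulVec (trunc b d m)) i).val / (b : ℝ) ^ ((i : ℕ) + 1)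

/-- The dual net of the digital net determined by `G`. -/
def dualNet (b : ℕ) {s l d : ℕ} (G : Fin s → Matrix (Fin l) (Fin d) (ZMod b)) :
    Set (Fin s → ℕ) :=
  {k | ∑ j, (G j)ᵀ.mulVec (trunc b l (k j)) = 0}

/-- The QMC algorithm given by the digital net with generating matrices `G`. -/
def qmcNet (b : ℕ) {s l d : ℕ} (G : Fin s → Matrix (Fin l) (Fin d) (ZMod b))
    (f : (Fin s → ℝ) → ℝ) : ℝ :=
  ((b : ℝ) ^ d)⁻¹ * ∑ m ∈ Finset.range (b ^ d), f (netPoint b G m)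

/-- `n_j = #{i ∈ ℕ : i + a ≤ 1}` (with `i` ranging over positive integers). -/
def negCount (a : ℝ) : ℕ := Set.ncard {i : ℕ | 0 < i ∧ (i : ℝ) + a ≤ 1}

/-!
Sampling `wal_k` at the net points gives `ψ(v_k ⬝ m)`, with `ψ` the standard character of `ℤ_b` and
`m` running over `ℤ_b^d`; its average is `1` on the dual net and `0` off it. Hence the error of the
net on `f` is the sum of `f̂(k)` over the nonzero `k` in the dual net. There
`|f̂(k)| ≤ ‖f‖ b^{-μ'_a(k)} ≤ ‖f‖ b^{-(1-θ)δ} b^{-θμ'_a(k)}`, and `∑_k b^{-θμ'_a(k)}` factors over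
coordinates and digit places into `∏_j ∏_i (1 + (b-1) b^{-θ max(i+a_j,1)})`. By `1 + x ≤ exp x` this
is controlled by `∑_i b^{-θ max(i+a_j,1)} ≤ n_j + 1/(θ log b)`: the `n_j` places where the maximum
is `1` contribute at most `1` each, the others a geometric tail. The theorem is the case `θ = 1/2`.
-/

section Digits

lemma natDigit_lt {b : ℕ} [NeZero b] (k i : ℕ) : natDigit b k i < b :=
  Nat.mod_lt _ (NeZero.pos b)

lemma natDigit_eq_zero_of_lt_pow {b k i : ℕ} (h : k < b ^ i) : natDigit b k i = 0 := by
  rw [natDigit, Nat.div_eq_of_lt h, Nat.zero_mod]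

lemma natDigit_eq_zero_of_le {b : ℕ} [NeZero b] {k i : ℕ} (h : k ≤ i) : natDigit b k i = 0 := by
  rcases (NeZero.one_le (n := b)).eq_or_lt with rfl | hb
  · exact Nat.mod_one _
  · exact natDigit_eq_zero_of_lt_pow (h.trans_lt (Nat.lt_pow_self hb))

lemma sum_range_eq_sum_range_of_eq_zero {M : Type*} [AddCommMonoid M] {f : ℕ → M} {m n : ℕ}
    (hm : ∀ i ≥ m, f i = 0) (hn : ∀ i ≥ n, f i = 0) :
    ∑ i ∈ Finset.range m, f i = ∑ i ∈ Finset.range n, f i :=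
  (Finset.eventually_constant_sum hm (le_max_left m n)).symm.trans
    (Finset.eventually_constant_sum hn (le_max_right m n))

lemma trunc_bijective (b d : ℕ) [NeZero b] :
    Function.Bijective fun m : Fin (b ^ d) => trunc b d m := by
  rw [Fintype.bijective_iff_injective_and_card]
  refine ⟨fun m m' h => finFunctionFinEquiv.symm.injective ?_, by simp⟩
  funext i
  have hval := congrArg ZMod.val (congrFun h i)
  simp only [trunc, ZMod.val_natCast_of_lt (natDigit_lt _ _)] at hval
  exact Fin.ext hval

lemma sum_range_pow_trunc {M : Type*} [AddCommMonoid M] (b d : ℕ) [NeZero b]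
    (F : (Fin d → ZMod b) → M) :
    ∑ m ∈ Finset.range (b ^ d), F (trunc b d m) = ∑ t, F t := by
  rw [Finset.sum_range]
  exact (trunc_bijective b d).sum_comp F

lemma natDigit_cast_eq_zero_iff {b : ℕ} [NeZero b] {k i : ℕ} :
    (natDigit b k i : ZMod b) = 0 ↔ natDigit b k i = 0 := by
  rw [ZMod.natCast_eq_zero_iff]
  exact ⟨fun h => Nat.eq_zero_of_dvd_of_lt h (natDigit_lt k i), fun h => h ▸ dvd_zero b⟩

/-- The real number `0.y₀y₁…y_{l-1}` in base `b`; each coordinate of a point of a digital net has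
this form. -/
def fracOfDigits (b : ℕ) {l : ℕ} (y : Fin l → ℕ) : ℝ :=
  ∑ i, (y i : ℝ) / (b : ℝ) ^ ((i : ℕ) + 1)

lemma fracOfDigits_succ (b : ℕ) {l : ℕ} (y : Fin (l + 1) → ℕ) :
    fracOfDigits b y = (y 0 + fracOfDigits b (Fin.tail y)) / b := by
  rw [fracOfDigits, fracOfDigits, Fin.sum_univ_succ, add_div, Finset.sum_div]
  congr 1
  · simp
  · refine Finset.sum_congr rfl fun i _ => ?_
    rw [div_div, ← pow_succ, Fin.val_succ, Fin.tail]

lemma fracOfDigits_mem_Ico {b l : ℕ} {y : Fin l → ℕ} (hy : ∀ i, y i < b) :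
    fracOfDigits b y ∈ Set.Ico (0 : ℝ) 1 := by
  refine ⟨Finset.sum_nonneg fun i _ => by positivity, ?_⟩
  induction l with
  | zero => simp [fracOfDigits]
  | succ l ih =>
    have hb : (0 : ℝ) < b := by exact_mod_cast (Nat.zero_le _).trans_lt (hy 0)
    have hhead : (y 0 : ℝ) + 1 ≤ b := by exact_mod_cast hy 0
    have htail := ih (y := Fin.tail y) fun i => hy i.succ
    rw [fracOfDigits_succ, div_lt_one hb]
    linarith

lemma realDigit_natCast_add_div_zero {b c : ℕ} {x : ℝ} (hc : c < b) (hx : x ∈ Set.Ico (0 : ℝ) 1) :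
    realDigit b ((c + x) / b) 0 = c := by
  have hb : (b : ℝ) ≠ 0 := by exact_mod_cast (Nat.zero_le c).trans_lt hc |>.ne'
  have hfloor : ⌊(c + x : ℝ)⌋ = c := by
    rw [Int.floor_natCast_add, Int.floor_eq_zero_iff.mpr hx, add_zero]
  rw [realDigit, zero_add, pow_one, div_mul_cancel₀ _ hb, hfloor, ← Int.natCast_mod,
    Int.toNat_natCast, Nat.mod_eq_of_lt hc]

lemma realDigit_natCast_add_div_succ (b : ℕ) [NeZero b] (c n : ℕ) (x : ℝ) :
    realDigit b ((c + x) / b) (n + 1) = realDigit b x n := by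
  have hb : (b : ℝ) ≠ 0 := NeZero.ne _
  have hshift : (c + x) / b * (b : ℝ) ^ (n + 1 + 1) =
      x * (b : ℝ) ^ (n + 1) + ((c * b ^ n * b : ℤ) : ℝ) := by
    push_cast
    field_simp
    ring
  rw [realDigit, hshift, Int.floor_add_intCast, Int.add_mul_emod_self_right, realDigit]

lemma realDigit_fracOfDigits {b l : ℕ} {y : Fin l → ℕ} (hy : ∀ i, y i < b) (i : Fin l) :
    realDigit b (fracOfDigits b y) i = y i := by
  induction l with
  | zero => exact i.elim0
  | succ l ih =>
    have : NeZero b := .of_gt (hy 0)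
    have htail (i) : Fin.tail y i < b := hy i.succ
    rw [fracOfDigits_succ]
    cases i using Fin.cases with
    | zero => exact realDigit_natCast_add_div_zero (hy 0) (fracOfDigits_mem_Ico htail)
    | succ i => exact (realDigit_natCast_add_div_succ b _ _ _).trans (ih htail i)

lemma realDigit_fracOfDigits_of_le {b l : ℕ} [NeZero b] (y : Fin l → ℕ) {n : ℕ} (hn : l ≤ n) :
    realDigit b (fracOfDigits b y) n = 0 := by
  induction l generalizing n with
  | zero => simp [realDigit, fracOfDigits]
  | succ l ih =>
    obtain ⟨n, rfl⟩ := Nat.exists_eq_add_of_le' (Nat.one_le_of_lt hn)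
    rw [fracOfDigits_succ, realDigit_natCast_add_div_succ]
    exact ih _ (Nat.le_of_succ_le_succ hn)

end Digits

section CharacterSums

lemma addChar_sum {A M ι : Type*} [AddCommMonoid A] [CommMonoid M] (ψ : AddChar A M)
    (t : Finset ι) (f : ι → A) : ψ (∑ i ∈ t, f i) = ∏ i ∈ t, ψ (f i) :=
  map_prod ψ.toMonoidHom (fun i => Multiplicative.ofAdd (f i)) t

lemma sum_addChar_dotProduct {R R' ι : Type*} [CommRing R] [Fintype R] [DecidableEq R]
    [CommRing R'] [IsDomain R'] [Fintype ι] [DecidableEq ι] {ψ : AddChar R R'}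
    (hψ : ψ.IsPrimitive) (v : ι → R) :
    ∑ t : ι → R, ψ (v ⬝ᵥ t) = if v = 0 then (Fintype.card R : R') ^ Fintype.card ι else 0 := by
  calc ∑ t : ι → R, ψ (v ⬝ᵥ t)
      = ∏ i, ∑ z : R, ψ (z * v i) := by
        simp_rw [dotProduct, addChar_sum, mul_comm (v _)]
        rw [Fintype.prod_sum]
    _ = ∏ i, if v i = 0 then (Fintype.card R : R') else 0 := by
        simp_rw [AddChar.sum_mulShift _ hψ, Nat.cast_ite, Nat.cast_zero]
    _ = _ := by
        simp [Finset.prod_ite_zero, funext_iff]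

end CharacterSums

section DigitalNets

lemma intBox_eq_walshCoeff_zero (b : ℕ) {s : ℕ} (f : (Fin s → ℝ) → ℝ) :
    (intBox s f : ℂ) = walshCoeff b f 0 := by
  have hwal (x : Fin s → ℝ) : wal b 0 x = 1 := by simp [wal, wal1]
  simp only [intBox, walshCoeff, hwal, map_one, mul_one]
  exact integral_ofReal.symm

variable {b s l d : ℕ} (G : Fin s → Matrix (Fin l) (Fin d) (ZMod b))

lemma netPoint_eq_fracOfDigits (m : ℕ) (j : Fin s) :
    netPoint b G m j = fracOfDigits b fun i => ((G j).mulVec (trunc b d m) i).val :=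
  rfl

lemma zero_mem_dualNet : (0 : Fin s → ℕ) ∈ dualNet b G := by
  have htrunc : trunc b l 0 = 0 := by
    funext i
    simp [trunc, natDigit]
  simp [dualNet, htrunc]

variable [NeZero b] {f : (Fin s → ℝ) → ℝ}

lemma wal1_eq_stdAddChar (k : ℕ) (x : ℝ) :
    wal1 b k x = ZMod.stdAddChar
      (∑ i ∈ Finset.range k, (natDigit b k i : ZMod b) * (realDigit b x i : ZMod b)) := by
  have h := ZMod.stdAddChar_coe (N := b)
    ((∑ i ∈ Finset.range k, natDigit b k i * realDigit b x i : ℕ) : ℤ)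
  push_cast at h
  rw [wal1, h]
  push_cast
  ring_nf

lemma wal1_fracOfDigits (k : ℕ) {l : ℕ} {y : Fin l → ℕ} (hy : ∀ i, y i < b) :
    wal1 b k (fracOfDigits b y) =
      ZMod.stdAddChar (trunc b l k ⬝ᵥ fun i => (y i : ZMod b)) := by
  rw [wal1_eq_stdAddChar, sum_range_eq_sum_range_of_eq_zero (n := l)
    (fun i hi => by rw [natDigit_eq_zero_of_le hi, Nat.cast_zero, zero_mul])
    (fun i hi => by rw [realDigit_fracOfDigits_of_le y hi, Nat.cast_zero, mul_zero]),
    Finset.sum_range]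
  simp only [realDigit_fracOfDigits hy, dotProduct, trunc]

lemma netPoint_mem_unitCube (m : ℕ) : netPoint b G m ∈ unitCube s :=
  fun _ _ => fracOfDigits_mem_Ico fun _ => ZMod.val_lt _

lemma wal_netPoint (k : Fin s → ℕ) (m : ℕ) :
    wal b k (netPoint b G m) =
      ZMod.stdAddChar ((∑ j, (G j)ᵀ.mulVec (trunc b l (k j))) ⬝ᵥ trunc b d m) := by
  rw [wal, sum_dotProduct, addChar_sum]
  refine Finset.prod_congr rfl fun j _ => ?_
  rw [netPoint_eq_fracOfDigits, wal1_fracOfDigits _ fun _ => ZMod.val_lt _, mulVec_transpose,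
    ← dotProduct_mulVec]
  simp only [ZMod.natCast_zmod_val]

lemma sum_wal_netPoint (k : Fin s → ℕ) :
    ∑ m ∈ Finset.range (b ^ d), wal b k (netPoint b G m) =
      (dualNet b G).indicator (fun _ => (b : ℂ) ^ d) k := by
  classical
  rw [Set.indicator_apply]
  simp_rw [wal_netPoint]
  rw [sum_range_pow_trunc b d fun t => ZMod.stdAddChar (_ ⬝ᵥ t),
    sum_addChar_dotProduct (ZMod.isPrimitive_stdAddChar b), ZMod.card, Fintype.card_fin]
  exact if_congr Iff.rfl rfl rfl

lemma hasSum_qmcNet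
    (hf : ∀ x ∈ unitCube s, HasSum (fun k => walshCoeff b f k * wal b k x) (f x : ℂ)) :
    HasSum ((dualNet b G).indicator (walshCoeff b f)) (qmcNet b G f : ℂ) := by
  have hsum := (hasSum_sum (s := Finset.range (b ^ d)) fun m _ =>
    hf _ (netPoint_mem_unitCube G m)).mul_left ((b : ℂ) ^ d)⁻¹
  have hb : (b : ℂ) ^ d ≠ 0 := pow_ne_zero _ (NeZero.ne _)
  have hcoeff : (dualNet b G).indicator (walshCoeff b f) = fun k => ((b : ℂ) ^ d)⁻¹ *
      ∑ m ∈ Finset.range (b ^ d), walshCoeff b f k * wal b k (netPoint b G m) := by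
    funext k
    rw [← Finset.mul_sum, sum_wal_netPoint]
    by_cases hk : k ∈ dualNet b G
    · simp only [Set.indicator_of_mem hk]
      field_simp
    · simp only [Set.indicator_of_notMem hk, mul_zero]
  have hqmc : (qmcNet b G f : ℂ) =
      ((b : ℂ) ^ d)⁻¹ * ∑ m ∈ Finset.range (b ^ d), (f (netPoint b G m) : ℂ) := by
    simp [qmcNet]
  rw [hcoeff, hqmc]
  exact hsum

lemma hasSum_qmcNet_sub_intBox
    (hf : ∀ x ∈ unitCube s, HasSum (fun k => walshCoeff b f k * wal b k x) (f x : ℂ)) :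
    HasSum ((dualNet b G \ {0}).indicator (walshCoeff b f))
      ((qmcNet b G f - intBox s f : ℝ) : ℂ) := by
  rw [Complex.ofReal_sub, intBox_eq_walshCoeff_zero b,
    Set.indicator_sdiff (Set.singleton_subset_iff.mpr (zero_mem_dualNet G))]
  refine (hasSum_qmcNet G hf).sub ?_
  simpa using hasSum_single (f := Set.indicator {0} (walshCoeff b f)) 0 fun k hk =>
    Set.indicator_of_notMem (Set.mem_singleton_iff.not.mpr hk) _

end DigitalNets

section DickWeight

/-- The contribution `max (i + a) 1` of a nonzero digit to the modified Dick weight; here places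
are counted from `0`, so `i` stands for the paper's `i + 1`. -/
def digitCost (a : ℝ) (i : ℕ) : ℝ := max ((i : ℝ) + 1 + a) 1

lemma mdickWt_eq_sum_trunc {b : ℕ} [NeZero b] (a : ℝ) {N k : ℕ} (hk : k < b ^ N) :
    mdickWt b a k = ∑ i : Fin N, if trunc b N k i = 0 then 0 else digitCost a i := by
  have hdigit (i) (hi : N ≤ i) : natDigit b k i = 0 :=
    natDigit_eq_zero_of_lt_pow (hk.trans_le (Nat.pow_le_pow_right (NeZero.pos b) hi))
  rw [mdickWt, sum_range_eq_sum_range_of_eq_zero (n := N)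
    (fun i hi => if_neg (not_not.mpr (natDigit_eq_zero_of_le hi)))
    (fun i hi => if_neg (not_not.mpr (hdigit i hi))), Finset.sum_range]
  simp only [ite_not, trunc, natDigit_cast_eq_zero_iff, digitCost]

lemma mdickWtV_nonneg (b : ℕ) {s : ℕ} (a : Fin s → ℝ) (k : Fin s → ℕ) : 0 ≤ mdickWtV b a k := by
  refine Finset.sum_nonneg fun j _ => Finset.sum_nonneg fun i _ => ?_
  split_ifs
  · exact zero_le_one.trans (le_max_right _ _)
  · exact le_rfl

lemma sum_range_pow_exp_neg_mdickWt (b : ℕ) [NeZero b] (a c : ℝ) (N : ℕ) :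
    ∑ k ∈ Finset.range (b ^ N), Real.exp (-c * mdickWt b a k) =
      ∏ i ∈ Finset.range N, (1 + ((b : ℝ) - 1) * Real.exp (-c * digitCost a i)) := by
  calc ∑ k ∈ Finset.range (b ^ N), Real.exp (-c * mdickWt b a k)
      = ∑ k ∈ Finset.range (b ^ N),
          ∏ i : Fin N, if trunc b N k i = 0 then 1 else Real.exp (-c * digitCost a i) := by
        refine Finset.sum_congr rfl fun k hk => ?_
        rw [mdickWt_eq_sum_trunc a (Finset.mem_range.mp hk), Finset.mul_sum, Real.exp_sum]
        simp only [mul_ite, mul_zero, apply_ite Real.exp, Real.exp_zero]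
    _ = ∑ t : Fin N → ZMod b,
          ∏ i : Fin N, if t i = 0 then 1 else Real.exp (-c * digitCost a i) :=
        sum_range_pow_trunc b N fun t => ∏ i, if t i = 0 then 1 else Real.exp (-c * digitCost a i)
    _ = ∏ i : Fin N, ∑ z : ZMod b, if z = 0 then 1 else Real.exp (-c * digitCost a i) := by
        rw [Fintype.prod_sum]
    _ = _ := by
        rw [Finset.prod_range]
        refine Finset.prod_congr rfl fun i _ => ?_
        rw [Fintype.sum_eq_add_sum_compl 0, if_pos rfl, Finset.sum_ite_of_false (by simp),
          Finset.sum_const, Finset.card_compl, ZMod.card, Finset.card_singleton, nsmul_eq_mul,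
          Nat.cast_pred (NeZero.pos b)]

lemma finite_setOf_add_le_one (a : ℝ) : {i : ℕ | 0 < i ∧ (i : ℝ) + a ≤ 1}.Finite :=
  (Set.finite_Iic ⌊1 - a⌋₊).subset fun _ hi => Nat.le_floor (by linarith [hi.2])

lemma card_filter_add_one_add_le_one_le_negCount (a : ℝ) (N : ℕ) :
    ((Finset.range N).filter fun i : ℕ => (i : ℝ) + 1 + a ≤ 1).card ≤ negCount a := by
  rw [negCount, ← Finset.card_image_of_injective _ Nat.succ_injective, ← Set.ncard_coe_finset]
  refine Set.ncard_le_ncard (fun i hi => ?_) (finite_setOf_add_le_one a)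
  obtain ⟨n, hn, rfl⟩ := Finset.mem_image.mp (Finset.mem_coe.mp hi)
  exact ⟨n.succ_pos, by simpa using (Finset.mem_filter.mp hn).2⟩

-- Above the threshold, `c * exp (-c * (i + 1 + a))` is at most the integral of `c * exp (-c * x)`
-- over the unit interval ending at `i + 1 + a`; the truncation `max · 0` makes the bound telescope.
lemma exp_neg_digitCost_le {c : ℝ} (hc : 0 < c) (a : ℝ) (i : ℕ) :
    Real.exp (-c * digitCost a i) ≤ (if (i : ℝ) + 1 + a ≤ 1 then 1 else 0) +
      (Real.exp (-c * max (i + a) 0) - Real.exp (-c * max ((i + 1 : ℕ) + a) 0)) / c := by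
  push_cast
  split_ifs with h
  · have hone : Real.exp (-c * digitCost a i) ≤ 1 := by
      rw [Real.exp_le_one_iff, neg_mul, neg_nonpos, digitCost]
      positivity
    have hanti : Real.exp (-c * max (i + 1 + a) 0) ≤ Real.exp (-c * max (i + a) 0) := by
      have : max ((i : ℝ) + a) 0 ≤ max (i + 1 + a) 0 := max_le_max_right 0 (by linarith)
      exact Real.exp_le_exp.mpr (mul_le_mul_of_nonpos_left this (neg_nonpos.mpr hc.le))
    have := div_nonneg (sub_nonneg.mpr hanti) hc.le
    linarith
  · rw [digitCost, max_eq_left (by linarith), max_eq_left (by linarith), max_eq_left (by linarith),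
      zero_add, le_div_iff₀ hc]
    have hstep : Real.exp (-c * (i + a)) = Real.exp (-c * (i + 1 + a)) * Real.exp c := by
      rw [← Real.exp_add]
      ring_nf
    rw [hstep]
    nlinarith [Real.add_one_le_exp c, Real.exp_pos (-c * (i + 1 + a))]

lemma sum_exp_neg_digitCost_le {c : ℝ} (hc : 0 < c) (a : ℝ) (N : ℕ) :
    ∑ i ∈ Finset.range N, Real.exp (-c * digitCost a i) ≤ negCount a + 1 / c := by
  refine (Finset.sum_le_sum fun i _ => exp_neg_digitCost_le hc a i).trans ?_
  rw [Finset.sum_add_distrib, Finset.sum_boole, ← Finset.sum_div,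
    Finset.sum_range_sub' fun i : ℕ => Real.exp (-c * max (i + a) 0)]
  have hfirst : Real.exp (-c * max ((0 : ℕ) + a) 0) ≤ 1 := by
    rw [Real.exp_le_one_iff, neg_mul, neg_nonpos]
    positivity
  gcongr
  · exact card_filter_add_one_add_le_one_le_negCount a N
  · linarith [Real.exp_pos (-c * max (N + a) 0)]

lemma sum_range_pow_exp_neg_mdickWt_le (b : ℕ) [NeZero b] (a : ℝ) {c : ℝ} (hc : 0 < c) (N : ℕ) :
    ∑ k ∈ Finset.range (b ^ N), Real.exp (-c * mdickWt b a k) ≤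
      Real.exp (((b : ℝ) - 1) * (negCount a + 1 / c)) := by
  have hb : (0 : ℝ) ≤ (b : ℝ) - 1 := sub_nonneg.mpr (by exact_mod_cast NeZero.one_le)
  rw [sum_range_pow_exp_neg_mdickWt]
  refine (Real.prod_one_add_le_exp_sum _ fun i => mul_nonneg hb (Real.exp_pos _).le).trans ?_
  rw [← Finset.mul_sum]
  gcongr
  exact sum_exp_neg_digitCost_le hc a N

lemma exists_subset_piFinset_range_pow {b : ℕ} (hb : 1 < b) {s : ℕ} (F : Finset (Fin s → ℕ)) :
    ∃ N, F ⊆ Fintype.piFinset fun _ => Finset.range (b ^ N) := by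
  refine ⟨F.sup fun k => Finset.univ.sup k, fun k hk => Fintype.mem_piFinset.mpr fun j => ?_⟩
  have hle : k j ≤ F.sup fun k => Finset.univ.sup k :=
    (Finset.le_sup (Finset.mem_univ j)).trans (Finset.le_sup (f := fun k => Finset.univ.sup k) hk)
  exact Finset.mem_range.mpr (hle.trans_lt (Nat.lt_pow_self hb))

lemma sum_exp_neg_mdickWtV_le {b : ℕ} (hb : 1 < b) {s : ℕ} (a : Fin s → ℝ) {c : ℝ}
    (hc : 0 < c) (F : Finset (Fin s → ℕ)) :
    ∑ k ∈ F, Real.exp (-c * mdickWtV b a k) ≤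
      Real.exp (((b : ℝ) - 1) * (∑ j, (negCount (a j) : ℝ) + s / c)) := by
  have : NeZero b := .of_gt hb
  obtain ⟨N, hF⟩ := exists_subset_piFinset_range_pow hb F
  calc ∑ k ∈ F, Real.exp (-c * mdickWtV b a k)
      ≤ ∑ k ∈ Fintype.piFinset fun _ : Fin s => Finset.range (b ^ N),
          Real.exp (-c * mdickWtV b a k) :=
        Finset.sum_le_sum_of_subset_of_nonneg hF fun _ _ _ => (Real.exp_pos _).le
    _ = ∏ j, ∑ k ∈ Finset.range (b ^ N), Real.exp (-c * mdickWt b (a j) k) := by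
        simp_rw [Finset.prod_univ_sum, mdickWtV, Finset.mul_sum, Real.exp_sum]
    _ ≤ ∏ j, Real.exp (((b : ℝ) - 1) * (negCount (a j) + 1 / c)) := by
        gcongr with j
        exact sum_range_pow_exp_neg_mdickWt_le b (a j) hc N
    _ = _ := by
        rw [← Real.exp_sum, ← Finset.mul_sum, Finset.sum_add_distrib, Finset.sum_const,
          Finset.card_univ, Fintype.card_fin, nsmul_eq_mul, mul_one_div]

lemma summable_exp_neg_mdickWtV {b : ℕ} (hb : 1 < b) {s : ℕ} (a : Fin s → ℝ) {c : ℝ}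
    (hc : 0 < c) :
    Summable fun k => Real.exp (-c * mdickWtV b a k) :=
  summable_of_sum_le (fun _ => (Real.exp_pos _).le) (sum_exp_neg_mdickWtV_le hb a hc)

lemma tsum_exp_neg_mdickWtV_le {b : ℕ} (hb : 1 < b) {s : ℕ} (a : Fin s → ℝ) {c : ℝ}
    (hc : 0 < c) :
    ∑' k, Real.exp (-c * mdickWtV b a k) ≤
      Real.exp (((b : ℝ) - 1) * (∑ j, (negCount (a j) : ℝ) + s / c)) :=
  Real.tsum_le_of_sum_le (fun _ => (Real.exp_pos _).le) (sum_exp_neg_mdickWtV_le hb a hc)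

end DickWeight

section WorstCaseError

variable {b s : ℕ} {a : Fin s → ℝ} {f : (Fin s → ℝ) → ℝ}

lemma norm_walshCoeff_le (hb : 0 < b) (hf : MemW' b a f) (k : Fin s → ℕ) :
    ‖walshCoeff b f k‖ ≤ normW' b a f * Real.exp (-Real.log b * mdickWtV b a k) := by
  have hb' : (0 : ℝ) < b := Nat.cast_pos.mpr hb
  rw [neg_mul, Real.exp_neg, ← Real.rpow_def_of_pos hb', ← div_eq_mul_inv,
    le_div_iff₀ (Real.rpow_pos_of_pos hb' _)]
  exact le_ciSup hf.2 k

lemma normW'_nonneg (b : ℕ) (a : Fin s → ℝ) (f : (Fin s → ℝ) → ℝ) : 0 ≤ normW' b a f :=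
  Real.iSup_nonneg fun _ => by positivity

variable {l d : ℕ} {G : Fin s → Matrix (Fin l) (Fin d) (ZMod b)} {δ θ : ℝ}

lemma exp_neg_log_mul_le (b : ℕ) {x : ℝ} (hx : δ ≤ x) (hθ : θ ≤ 1) :
    Real.exp (-Real.log b * x) ≤
      Real.exp (-(θ * Real.log b) * x) * Real.exp (-((1 - θ) * δ * Real.log b)) := by
  have hlog : 0 ≤ Real.log b := Real.log_natCast_nonneg b
  have := mul_le_mul_of_nonneg_left hx (mul_nonneg (sub_nonneg.mpr hθ) hlog)
  rw [← Real.exp_add, Real.exp_le_exp]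
  linarith

lemma abs_intBox_sub_qmcNet_le (hb : 1 < b) (hθ₀ : 0 < θ) (hθ₁ : θ ≤ 1)
    (hδ : δ ∈ lowerBounds (mdickWtV b a '' (dualNet b G \ {0}))) (hf : MemW' b a f) :
    |intBox s f - qmcNet b G f| ≤ normW' b a f *
      (Real.exp (((b : ℝ) - 1) * (∑ j, (negCount (a j) : ℝ) + s / (θ * Real.log b))) *
        Real.exp (-((1 - θ) * δ * Real.log b))) := by
  have : NeZero b := .of_gt hb
  have hc : 0 < θ * Real.log b := mul_pos hθ₀ (Real.log_pos (by exact_mod_cast hb))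
  have hterm (k) : ‖(dualNet b G \ {0}).indicator (walshCoeff b f) k‖ ≤ normW' b a f *
      (Real.exp (-(θ * Real.log b) * mdickWtV b a k) *
        Real.exp (-((1 - θ) * δ * Real.log b))) := by
    by_cases hk : k ∈ dualNet b G \ {0}
    · rw [Set.indicator_of_mem hk]
      refine (norm_walshCoeff_le (NeZero.pos b) hf k).trans ?_
      gcongr
      · exact normW'_nonneg b a f
      · exact exp_neg_log_mul_le b (hδ (Set.mem_image_of_mem _ hk)) hθ₁
    · rw [Set.indicator_of_notMem hk, norm_zero]
      have := normW'_nonneg b a f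
      positivity
  have hbound := (hasSum_qmcNet_sub_intBox G hf.1).norm_le_of_bounded
    (((summable_exp_neg_mdickWtV hb a hc).hasSum.mul_right _).mul_left _) hterm
  rw [Complex.norm_real, Real.norm_eq_abs, abs_sub_comm] at hbound
  refine hbound.trans ?_
  gcongr
  · exact normW'_nonneg b a f
  · exact tsum_exp_neg_mdickWtV_le hb a hc

lemma worstErr_le {H : Set ((Fin s → ℝ) → ℝ)} {N A : ((Fin s → ℝ) → ℝ) → ℝ} {C : ℝ}
    (h : ∀ f ∈ H, N f ≤ 1 → |intBox s f - A f| ≤ C) : worstErr s H N A ≤ ENNReal.ofReal C :=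
  iSup_le fun f => iSup_le fun hf => iSup_le fun hN => ENNReal.ofReal_le_ofReal (h f hf hN)

lemma sInf_mdickWtV_mem_lowerBounds (b : ℕ) (a : Fin s → ℝ) (K : Set (Fin s → ℕ)) :
    sInf (mdickWtV b a '' K) ∈ lowerBounds (mdickWtV b a '' K) :=
  fun _ hx => csInf_le ⟨0, Set.forall_mem_image.mpr fun k _ => mdickWtV_nonneg b a k⟩ hx

lemma exp_le_exp_add_mul_inv_one_sub_exp_neg (x : ℝ) {y : ℝ} (hy : 0 < y) :
    Real.exp x ≤ Real.exp (x + y) * (1 - Real.exp (-y))⁻¹ := by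
  have hlt : Real.exp (-y) < 1 := Real.exp_lt_one_iff.mpr (neg_neg_of_pos hy)
  have hinv : 1 ≤ (1 - Real.exp (-y))⁻¹ :=
    (one_le_inv₀ (sub_pos.mpr hlt)).mpr (sub_le_self _ (Real.exp_pos _).le)
  exact (Real.exp_le_exp.mpr (by linarith)).trans
    (le_mul_of_one_le_right (Real.exp_pos _).le hinv)

lemma exp_mul_add_div_half_le (B n t : ℝ) {L : ℝ} (hL : 0 < L) :
    Real.exp (B * (n + t / (1 / 2 * L))) ≤
      Real.exp (B * n + L / 2 + 2 * B * t / L) * (1 - Real.exp (-L / 2))⁻¹ := by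
  have hexponent : B * n + L / 2 + 2 * B * t / L = B * (n + t / (1 / 2 * L)) + L / 2 := by
    field_simp
    ring
  rw [hexponent, neg_div]
  exact exp_le_exp_add_mul_inv_one_sub_exp_neg _ (half_pos hL)

end WorstCaseError

theorem statement14_general {b : ℕ} (hb : 1 < b) {s : ℕ} {a : Fin s → ℝ} {l d : ℕ}
    {G : Fin s → Matrix (Fin l) (Fin d) (ZMod b)} {θ : ℝ} (hθ₀ : 0 < θ) (hθ₁ : θ ≤ 1) {δ : ℝ}
    (hδ : δ ∈ lowerBounds (mdickWtV b a '' (dualNet b G \ {0}))) :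
    worstErr s {f | MemW' b a f} (normW' b a) (qmcNet b G) ≤ ENNReal.ofReal
      (Real.exp (((b : ℝ) - 1) * (∑ j, (negCount (a j) : ℝ) + s / (θ * Real.log b))) *
        Real.exp (-((1 - θ) * δ * Real.log b))) :=
  worstErr_le fun _ hf hN => (abs_intBox_sub_qmcNet_le hb hθ₀ hθ₁ hδ hf).trans
    (mul_le_of_le_one_left (by positivity) hN)

/-- for every digital net `P`, the worst-case error on `W'_{s,a}` satisfies
`e^wor(P, W'_{s,a}) ≤ C_s · exp(-δ_{P^⊥}·(log b)/2)` with the explicit constant `C_s`. -/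
theorem statement14 (b : ℕ) (hb : 2 ≤ b) (s : ℕ) (hs : 0 < s)
    (a : ℕ → ℝ) (ha : Monotone a)
    (S Cs : ℝ) (hS : S = ((b : ℝ) - 1) * ∑ j : Fin s, (negCount (a j) : ℝ))
    (hCs : Cs = Real.exp (S + Real.log b / 2 + 2 * ((b : ℝ) - 1) * s / Real.log b) *
      (1 - Real.exp (-(Real.log b) / 2))⁻¹)
    (l d : ℕ) (hdl : d ≤ l) (G : Fin s → Matrix (Fin l) (Fin d) (ZMod b))
    (δ : ℝ)
    (hδ : δ = sInf (mdickWtV b (fun j : Fin s => a j) '' (dualNet b G \ {0}))) :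
    worstErr s {f | MemW' b (fun j : Fin s => a j) f} (normW' b (fun j : Fin s => a j))
        (qmcNet b G) ≤
      ENNReal.ofReal (Cs * Real.exp (-δ * Real.log b / 2)) := by
  have hlog : 0 < Real.log b := Real.log_pos (by exact_mod_cast hb)
  have hlower := hδ ▸ sInf_mdickWtV_mem_lowerBounds b (fun j : Fin s => a j) (dualNet b G \ {0})
  refine (statement14_general hb one_half_pos one_half_lt_one.le hlower).trans
    (ENNReal.ofReal_le_ofReal ?_)
  rw [hCs, hS, show -δ * Real.log b / 2 = -((1 - 1 / 2) * δ * Real.log b) by ring]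
  gcongr
  exact exp_mul_add_div_half_le _ _ _ hlog

end
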